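/- arXiv:2010.14938 — 2 statements merged into one kernel-verified Lean document; each statement's English description precedes it below -/
import Mathlib

section
/- Let w ∈ L¹(ℝ) ∩ L²(ℝ) and let 𝓔 : ℝ → ℝ be twice continuously differentiable with 𝓔, 𝓔′, 𝓔″ bounded. For f, h ∈ L²(Ω_D) with Rh ∈ L⁴(Ω_S), letting (A(f)h)(s,θ) := ½·∫_ℝ w(r−s)·𝓔′(½·(Rf)(r,θ))·(Rh)(r,θ) dr, the following quadratic remainder estimate holds: ‖F(f+h) − F(f) − A(f)h‖_{L²(Ω_S)} ≤ ¼·‖w‖_{L²(ℝ)}·‖𝓔″‖_{L^∞(ℝ)}·‖Rh‖²_{L⁴(Ω_S)}. -/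
open MeasureTheory Real Set

/-- The Radon transform of `f : ℝ² → ℝ`:
`(Rf)(s,θ) = ∫_ℝ f(s·u(θ) + σ·u(θ)^⊥) dσ` with `u(θ) = (cos θ, sin θ)`,
`u(θ)^⊥ = (-sin θ, cos θ)`. -/
noncomputable def radonT (f : ℝ × ℝ → ℝ) (s θ : ℝ) : ℝ :=
  ∫ σ : ℝ, f (s * Real.cos θ - σ * Real.sin θ, s * Real.sin θ + σ * Real.cos θ)

/-- The closed unit disk `Ω_D ⊆ ℝ²`. -/
def unitDisk : Set (ℝ × ℝ) := {x : ℝ × ℝ | x.1 ^ 2 + x.2 ^ 2 ≤ 1}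

/-- The sinogram domain `Ω_S = [-1,1] × [0,2π)`. -/
def sinoDom : Set (ℝ × ℝ) := Icc (-1 : ℝ) 1 ×ˢ Ico (0 : ℝ) (2 * π)

/-- The forward operator `F(f)(s,θ) = ∫_ℝ w(r-s) · 𝓔(½ (Rf)(r,θ)) dr`. -/
noncomputable def Fop (w E : ℝ → ℝ) (f : ℝ × ℝ → ℝ) (s θ : ℝ) : ℝ :=
  ∫ r : ℝ, w (r - s) * E ((1 / 2) * radonT f r θ)

/-- The derivative operator
`(A(f)h)(s,θ) = ½ ∫_ℝ w(r-s) · 𝓔'(½ (Rf)(r,θ)) · (Rh)(r,θ) dr`. -/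
noncomputable def Aop (w E' : ℝ → ℝ) (f h : ℝ × ℝ → ℝ) (s θ : ℝ) : ℝ :=
  (1 / 2) * ∫ r : ℝ, w (r - s) * E' ((1 / 2) * radonT f r θ) * radonT h r θ

/-!
Write `G = (1/2) Rf` and `k = (1/2) Rh` for a fixed direction `θ`. By linearity of `R`, the
remainder at `(s, θ)` is the integral of `w (r - s)` against the first-order Taylor remainder of
`𝓔` at `G r` with increment `k r`, which is at most `(1/2) ‖𝓔''‖_∞ (k r)²`. Hölder's inequality in
`r` gives a bound by `(1/8) ‖𝓔''‖_∞ ‖w‖_{L²} ‖(Rh)²(·, θ)‖_{L²}` that does not depend on `s`, so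
taking the `L²` norm over `(s, θ)` costs only the factor `√2` from the length of `[-1, 1]`, and
`√2 / 8 ≤ 1 / 4`. The `L²` norm of `(Rh)²` is the square of the `L⁴` norm of `Rh`.
-/

section Taylor

/-- The remainder `E (x + t) - E x - E' x * t` of the first-order Taylor expansion of `E` at `x`. -/
noncomputable def taylorRemainder (E : ℝ → ℝ) (x t : ℝ) : ℝ :=
  E (x + t) - E x - deriv E x * t

variable {E : ℝ → ℝ} {N : ℝ}

lemma abs_taylorRemainder_le (hE : ContDiff ℝ 2 E) (hN : ∀ x, |deriv (deriv E) x| ≤ N)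
    (x t : ℝ) : |taylorRemainder E x t| ≤ N / 2 * t ^ 2 := by
  rcases eq_or_ne t 0 with rfl | ht
  · simp [taylorRemainder]
  have hne : x ≠ x + t := by simpa using ht
  obtain ⟨y, -, hy⟩ := taylor_mean_remainder_lagrange_iteratedDeriv (n := 1) hne hE.contDiffOn
  have hderiv : derivWithin E (uIcc x (x + t)) x = deriv E x :=
    (hE.differentiable two_ne_zero x).derivWithin (uniqueDiffOn_uIcc hne x left_mem_uIcc)
  have hrem : taylorRemainder E x t = deriv (deriv E) y * t ^ 2 / 2 := by
    simpa [taylorWithinEval_succ, hderiv, iteratedDeriv_succ, taylorRemainder, mul_comm,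
      sub_sub] using hy
  calc |taylorRemainder E x t| = |deriv (deriv E) y| / 2 * t ^ 2 := by
        rw [hrem, abs_div, abs_mul, abs_two, abs_sq]; ring
    _ ≤ N / 2 * t ^ 2 := by gcongr; exact hN y

end Taylor

section Integral

variable {α : Type*} [MeasurableSpace α] {μ : Measure α} {E : ℝ → ℝ} {v g k : α → ℝ} {M N : ℝ}
  {p q : ENNReal} [p.HolderConjugate q]

lemma integrable_mul_comp_of_bounded (hE : Continuous E) (hM : ∀ x, |E x| ≤ M)
    (hv : Integrable v μ) (hg : AEStronglyMeasurable g μ) :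
    Integrable (fun x => v x * E (g x)) μ :=
  hv.mul_bdd (hE.comp_aestronglyMeasurable hg) (ae_of_all _ fun x => hM (g x))

lemma abs_mul_taylorRemainder_le (hE : ContDiff ℝ 2 E) (hN : ∀ x, |deriv (deriv E) x| ≤ N)
    (a x t : ℝ) : |a * taylorRemainder E x t| ≤ N / 2 * |a * t ^ 2| := by
  calc |a * taylorRemainder E x t| = |a| * |taylorRemainder E x t| := abs_mul _ _
    _ ≤ |a| * (N / 2 * t ^ 2) := by gcongr; exact abs_taylorRemainder_le hE hN x t
    _ = N / 2 * |a * t ^ 2| := by rw [abs_mul, abs_sq]; ring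

lemma integrable_mul_taylorRemainder (hE : ContDiff ℝ 2 E)
    (hN : ∀ x, |deriv (deriv E) x| ≤ N) (hv : AEStronglyMeasurable v μ)
    (hg : AEStronglyMeasurable g μ) (hk : AEStronglyMeasurable k μ)
    (hvk : Integrable (fun x => v x * k x ^ 2) μ) :
    Integrable (fun x => v x * taylorRemainder E (g x) (k x)) μ := by
  have hE' : Continuous (deriv E) := hE.continuous_deriv one_le_two
  have hrem : AEStronglyMeasurable (fun x => taylorRemainder E (g x) (k x)) μ :=
    ((hE.continuous.comp_aestronglyMeasurable (hg.add hk)).sub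
      (hE.continuous.comp_aestronglyMeasurable hg)).sub
      ((hE'.comp_aestronglyMeasurable hg).mul hk)
  exact (hvk.abs.const_mul (N / 2)).mono' (hv.mul hrem)
    (ae_of_all _ fun x => abs_mul_taylorRemainder_le hE hN (v x) (g x) (k x))

lemma integral_mul_taylorRemainder
    (hadd : Integrable (fun x => v x * E (g x + k x)) μ)
    (hE : Integrable (fun x => v x * E (g x)) μ)
    (hrem : Integrable (fun x => v x * taylorRemainder E (g x) (k x)) μ) :
    ∫ x, v x * taylorRemainder E (g x) (k x) ∂μ =
      ∫ x, v x * E (g x + k x) ∂μ - ∫ x, v x * E (g x) ∂μ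
        - ∫ x, v x * deriv E (g x) * k x ∂μ := by
  -- The linear term is integrable because it is a combination of the other three.
  have hlin : (fun x => v x * deriv E (g x) * k x) = fun x =>
      v x * E (g x + k x) - v x * E (g x) - v x * taylorRemainder E (g x) (k x) := by
    funext x
    rw [taylorRemainder]
    ring
  have hdiff : Integrable (fun x => v x * E (g x + k x) - v x * E (g x)) μ := hadd.sub hE
  rw [hlin, integral_sub hdiff hrem, integral_sub hadd hE, sub_sub_cancel]

lemma lintegral_enorm_mul_le_eLpNorm_mul_eLpNorm (hv : AEStronglyMeasurable v μ)
    (hg : AEStronglyMeasurable g μ) :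
    ∫⁻ x, ‖v x * g x‖ₑ ∂μ ≤ eLpNorm v p μ * eLpNorm g q μ := by
  have hHolder := eLpNorm_smul_le_mul_eLpNorm (p := p) (q := q) (r := 1) hg hv
  rwa [eLpNorm_one_eq_lintegral_enorm] at hHolder

lemma enorm_integral_comp_add_sub_sub_le (hE : ContDiff ℝ 2 E) (hM : ∀ x, |E x| ≤ M)
    (hN : ∀ x, |deriv (deriv E) x| ≤ N) (hv1 : Integrable v μ) (hvp : MemLp v p μ)
    (hg : AEStronglyMeasurable g μ) (hk : AEStronglyMeasurable k μ)
    (hkq : MemLp (fun x => k x ^ 2) q μ) :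
    ‖∫ x, v x * E (g x + k x) ∂μ - ∫ x, v x * E (g x) ∂μ
        - ∫ x, v x * deriv E (g x) * k x ∂μ‖ₑ ≤
      ENNReal.ofReal (N / 2) * eLpNorm v p μ * eLpNorm (fun x => k x ^ 2) q μ := by
  have hvk : Integrable (fun x => v x * k x ^ 2) μ := hvp.integrable_mul hkq
  rw [← integral_mul_taylorRemainder
    (integrable_mul_comp_of_bounded hE.continuous hM hv1 (hg.add hk))
    (integrable_mul_comp_of_bounded hE.continuous hM hv1 hg)
    (integrable_mul_taylorRemainder hE hN hv1.1 hg hk hvk)]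
  have hN0 : 0 ≤ N / 2 := by linarith [(abs_nonneg _).trans (hN 0)]
  calc ‖∫ x, v x * taylorRemainder E (g x) (k x) ∂μ‖ₑ
      ≤ ∫⁻ x, ‖v x * taylorRemainder E (g x) (k x)‖ₑ ∂μ := enorm_integral_le_lintegral_enorm _
    _ ≤ ∫⁻ x, ENNReal.ofReal (N / 2) * ‖v x * k x ^ 2‖ₑ ∂μ := by
        refine lintegral_mono fun x => ?_
        rw [Real.enorm_eq_ofReal_abs, Real.enorm_eq_ofReal_abs, ← ENNReal.ofReal_mul hN0]
        exact ENNReal.ofReal_le_ofReal (abs_mul_taylorRemainder_le hE hN _ _ _)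
    _ = ENNReal.ofReal (N / 2) * ∫⁻ x, ‖v x * k x ^ 2‖ₑ ∂μ :=
        lintegral_const_mul' _ _ ENNReal.ofReal_ne_top
    _ ≤ ENNReal.ofReal (N / 2) * (eLpNorm v p μ * eLpNorm (fun x => k x ^ 2) q μ) := by
        gcongr
        exact lintegral_enorm_mul_le_eLpNorm_mul_eLpNorm hvp.1 hkq.1
    _ = _ := (mul_assoc _ _ _).symm

end Integral

section Lp

variable {α β F G : Type*} [MeasurableSpace α] [MeasurableSpace β] [NormedAddCommGroup F]
  [NormedAddCommGroup G] {μ : Measure α} {ν : Measure β} {p : ENNReal}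

lemma enorm_le_eLpNorm_top_of_continuous [TopologicalSpace α] [μ.IsOpenPosMeasure]
    {g : α → F} (hg : Continuous g) (x : α) : ‖g x‖ₑ ≤ eLpNorm g ⊤ μ := by
  have hclosed : IsClosed {y | ‖g y‖ₑ ≤ eLpNorm g ⊤ μ} := isClosed_le hg.enorm continuous_const
  have hdense : Dense {y | ‖g y‖ₑ ≤ eLpNorm g ⊤ μ} :=
    Measure.dense_of_ae (ae_le_eLpNormEssSup (f := g) (μ := μ))
  exact hclosed.closure_subset (hdense x)

lemma eLpNorm_sq (k : α → ℝ) : eLpNorm (fun x => k x ^ 2) p μ = eLpNorm k (p * 2) μ ^ 2 := by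
  simpa using eLpNorm_norm_rpow (p := p) (μ := μ) k two_pos

lemma memLp_sq {k : α → ℝ} (hk : MemLp k (p * 2) μ) : MemLp (fun x => k x ^ 2) p μ :=
  ⟨hk.1.pow 2, by rw [eLpNorm_sq]; exact ENNReal.pow_lt_top hk.2⟩

lemma norm_le_toReal_eLpNorm_top_of_continuous [TopologicalSpace α] [μ.IsOpenPosMeasure]
    {g : α → F} (hg : Continuous g) (hfin : eLpNorm g ⊤ μ ≠ ⊤) (x : α) :
    ‖g x‖ ≤ (eLpNorm g ⊤ μ).toReal := by
  rw [← toReal_enorm]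
  exact ENNReal.toReal_mono hfin (enorm_le_eLpNorm_top_of_continuous hg x)

variable [SFinite μ] [SFinite ν]

lemma lintegral_eLpNorm_fiber_rpow (hp0 : p ≠ 0) (hp : p ≠ ⊤) {k : α × β → F}
    (hk : AEStronglyMeasurable k (μ.prod ν)) :
    ∫⁻ y, eLpNorm (fun x => k (x, y)) p μ ^ p.toReal ∂ν =
      eLpNorm k p (μ.prod ν) ^ p.toReal := by
  simp_rw [eLpNorm_eq_lintegral_rpow_enorm_toReal hp0 hp, ← ENNReal.rpow_mul,
    one_div_mul_cancel (ENNReal.toReal_ne_zero.2 ⟨hp0, hp⟩), ENNReal.rpow_one]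
  exact (lintegral_prod_symm _ (hk.enorm.pow_const _)).symm

lemma aemeasurable_eLpNorm_fiber (hp0 : p ≠ 0) (hp : p ≠ ⊤) {k : α × β → F}
    (hk : AEStronglyMeasurable k (μ.prod ν)) :
    AEMeasurable (fun y => eLpNorm (fun x => k (x, y)) p μ) ν := by
  simp_rw [eLpNorm_eq_lintegral_rpow_enorm_toReal hp0 hp]
  exact (hk.enorm.pow_const p.toReal).lintegral_prod_left'.pow_const _

lemma ae_memLp_fiber (hp0 : p ≠ 0) (hp : p ≠ ⊤) {k : α × β → F}
    (hk : MemLp k p (μ.prod ν)) : ∀ᵐ y ∂ν, MemLp (fun x => k (x, y)) p μ := by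
  have hpos : 0 < p.toReal := ENNReal.toReal_pos hp0 hp
  have hfin : ∀ᵐ y ∂ν, eLpNorm (fun x => k (x, y)) p μ ^ p.toReal < ⊤ := by
    refine ae_lt_top' ((aemeasurable_eLpNorm_fiber hp0 hp hk.1).pow_const _) ?_
    rw [lintegral_eLpNorm_fiber_rpow hp0 hp hk.1]
    exact ENNReal.rpow_ne_top_of_nonneg hpos.le hk.2.ne
  filter_upwards [hfin, hk.1.prodMk_right] with y hy hmeas
  exact ⟨hmeas, (ENNReal.rpow_lt_top_iff_of_pos hpos).1 hy⟩

lemma eLpNorm_prod_le_of_enorm_le_eLpNorm_fiber (hp0 : p ≠ 0) (hp : p ≠ ⊤) {k : α × β → F}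
    (hk : AEStronglyMeasurable k (μ.prod ν)) {u : α × β → G} {C : ENNReal}
    (hu : ∀ᵐ y ∂ν, ∀ x, ‖u (x, y)‖ₑ ≤ C * eLpNorm (fun x' => k (x', y)) p μ) :
    eLpNorm u p (μ.prod ν) ≤ C * μ univ ^ (1 / p.toReal) * eLpNorm k p (μ.prod ν) := by
  have hpos : 0 < p.toReal := ENNReal.toReal_pos hp0 hp
  rw [← ENNReal.rpow_le_rpow_iff hpos]
  calc eLpNorm u p (μ.prod ν) ^ p.toReal
      = ∫⁻ z, ‖u z‖ₑ ^ p.toReal ∂μ.prod ν := by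
        rw [eLpNorm_eq_lintegral_rpow_enorm_toReal hp0 hp, ← ENNReal.rpow_mul,
          one_div_mul_cancel hpos.ne', ENNReal.rpow_one]
    _ ≤ ∫⁻ z, C ^ p.toReal * eLpNorm (fun x => k (x, z.2)) p μ ^ p.toReal ∂μ.prod ν := by
        refine lintegral_mono_ae ?_
        filter_upwards [Measure.quasiMeasurePreserving_snd.ae hu] with z hz
        rw [← ENNReal.mul_rpow_of_nonneg _ _ hpos.le]
        exact ENNReal.rpow_le_rpow (hz z.1) hpos.le
    _ = C ^ p.toReal * μ univ * eLpNorm k p (μ.prod ν) ^ p.toReal := by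
        rw [lintegral_prod_mul aemeasurable_const
          ((aemeasurable_eLpNorm_fiber hp0 hp hk).pow_const _), lintegral_const,
          lintegral_eLpNorm_fiber_rpow hp0 hp hk]
    _ = (C * μ univ ^ (1 / p.toReal) * eLpNorm k p (μ.prod ν)) ^ p.toReal := by
        rw [ENNReal.mul_rpow_of_nonneg _ _ hpos.le, ENNReal.mul_rpow_of_nonneg _ _ hpos.le,
          ← ENNReal.rpow_mul, one_div_mul_cancel hpos.ne', ENNReal.rpow_one]

end Lp

section Radon

variable {f h : ℝ × ℝ → ℝ}

lemma measurePreserving_rotation (θ : ℝ) :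
    MeasurePreserving fun z : ℝ × ℝ =>
      (z.1 * cos θ - z.2 * sin θ, z.1 * sin θ + z.2 * cos θ) := by
  convert (Complex.volume_preserving_equiv_real_prod.comp
    (rotation (Circle.exp θ)).measurePreserving).comp
      Complex.volume_preserving_equiv_real_prod.symm using 1
  funext z
  ext <;> simp [rotation_apply, Circle.coe_exp, Complex.measurableEquivRealProd,
    Complex.exp_ofReal_mul_I_re, Complex.exp_ofReal_mul_I_im] <;> ring

lemma integrable_comp_rotation (hf : Integrable f) (θ : ℝ) :
    Integrable fun z : ℝ × ℝ =>
      f (z.1 * cos θ - z.2 * sin θ, z.1 * sin θ + z.2 * cos θ) :=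
  (measurePreserving_rotation θ).integrable_comp_of_integrable hf

lemma aestronglyMeasurable_radonT (hf : Integrable f) (θ : ℝ) :
    AEStronglyMeasurable (fun r => radonT f r θ) :=
  (integrable_comp_rotation hf θ).1.integral_prod_right'

lemma radonT_add_ae (hf : Integrable f) (hh : Integrable h) (θ : ℝ) :
    ∀ᵐ r, radonT (f + h) r θ = radonT f r θ + radonT h r θ := by
  filter_upwards [(integrable_comp_rotation hf θ).prod_right_ae,
    (integrable_comp_rotation hh θ).prod_right_ae] with r hfr hhr
  exact integral_add hfr hhr

lemma unitDisk_subset_Icc_prod_Icc : unitDisk ⊆ Icc (-1) 1 ×ˢ Icc (-1) 1 := fun z hz => by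
  have hz' : z.1 ^ 2 + z.2 ^ 2 ≤ 1 := hz
  exact ⟨abs_le.1 (abs_le_one_iff_mul_self_le_one.2 (by nlinarith [sq_nonneg z.2])),
    abs_le.1 (abs_le_one_iff_mul_self_le_one.2 (by nlinarith [sq_nonneg z.1]))⟩

lemma volume_unitDisk_ne_top : volume unitDisk ≠ ⊤ :=
  measure_ne_top_of_subset unitDisk_subset_Icc_prod_Icc
    (isCompact_Icc.prod isCompact_Icc).measure_ne_top

lemma integrable_of_memLp_of_support_subset_unitDisk {p : ENNReal} (hp : 1 ≤ p) (hf : MemLp f p)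
    (hsupp : Function.support f ⊆ unitDisk) : Integrable f := by
  have : IsFiniteMeasure ((volume : Measure (ℝ × ℝ)).restrict unitDisk) :=
    isFiniteMeasure_restrict.2 volume_unitDisk_ne_top
  exact (integrableOn_iff_integrable_of_support_subset hsupp).1 ((hf.restrict _).integrable hp)

lemma support_radonT_subset_Icc (hsupp : Function.support h ⊆ unitDisk) (θ : ℝ) :
    Function.support (fun r => radonT h r θ) ⊆ Icc (-1) 1 := fun r hr => by
  obtain ⟨σ, hσ⟩ : ∃ σ, h (r * cos θ - σ * sin θ, r * sin θ + σ * cos θ) ≠ 0 := by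
    by_contra! hzero
    exact hr (by simp [radonT, hzero])
  have hmem : (r * cos θ - σ * sin θ) ^ 2 + (r * sin θ + σ * cos θ) ^ 2 ≤ 1 := hsupp hσ
  have hrot : (r * cos θ - σ * sin θ) ^ 2 + (r * sin θ + σ * cos θ) ^ 2 = r ^ 2 + σ ^ 2 := by
    linear_combination (r ^ 2 + σ ^ 2) * sin_sq_add_cos_sq θ
  exact abs_le.1 (abs_le_one_iff_mul_self_le_one.2 (by nlinarith [sq_nonneg σ]))

lemma volume_restrict_sinoDom : (volume : Measure (ℝ × ℝ)).restrict sinoDom =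
    (volume.restrict (Icc (-1) 1)).prod (volume.restrict (Ico 0 (2 * π))) :=
  (Measure.prod_restrict _ _).symm

end Radon

section ForwardOperator

variable {w E : ℝ → ℝ} {f h : ℝ × ℝ → ℝ} {M N : ℝ} {p q : ENNReal} [p.HolderConjugate q]

lemma Fop_add (w E : ℝ → ℝ) (hf : Integrable f) (hh : Integrable h) (s θ : ℝ) :
    Fop w E (f + h) s θ =
      ∫ r, w (r - s) * E ((1 / 2) * radonT f r θ + (1 / 2) * radonT h r θ) := by
  refine integral_congr_ae ?_
  filter_upwards [radonT_add_ae hf hh θ] with r hr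
  rw [hr, mul_add]

lemma Aop_eq_integral (w E' : ℝ → ℝ) (f h : ℝ × ℝ → ℝ) (s θ : ℝ) :
    Aop w E' f h s θ =
      ∫ r, w (r - s) * E' ((1 / 2) * radonT f r θ) * ((1 / 2) * radonT h r θ) := by
  rw [Aop, ← integral_const_mul]
  exact integral_congr_ae (ae_of_all _ fun r => by ring)

lemma enorm_Fop_add_sub_sub_Aop_le (hw1 : Integrable w) (hwp : MemLp w p)
    (hE : ContDiff ℝ 2 E) (hM : ∀ x, |E x| ≤ M) (hN : ∀ x, |deriv (deriv E) x| ≤ N)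
    (hf : Integrable f) (hh : Integrable h) (s θ : ℝ)
    (hRh : MemLp (fun r => radonT h r θ ^ 2) q) :
    ‖Fop w E (f + h) s θ - Fop w E f s θ - Aop w (deriv E) f h s θ‖ₑ ≤
      ENNReal.ofReal (N / 8) * eLpNorm w p * eLpNorm (fun r => radonT h r θ ^ 2) q := by
  have hsq : (fun r => ((1 / 2) * radonT h r θ) ^ 2) =
      (1 / 4 : ℝ) • fun r => radonT h r θ ^ 2 := by
    funext r
    simp only [Pi.smul_apply, smul_eq_mul]
    ring
  have hsqLp : MemLp (fun r => ((1 / 2) * radonT h r θ) ^ 2) q := by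
    rw [hsq]
    exact hRh.const_smul _
  have htranslate : MeasurePreserving (fun r : ℝ => r - s) := measurePreserving_sub_right _ s
  have hwnorm : eLpNorm (fun r => w (r - s)) p = eLpNorm w p :=
    eLpNorm_comp_measurePreserving hwp.1 htranslate
  have hconst : ENNReal.ofReal (N / 8) = ENNReal.ofReal (N / 2) * ENNReal.ofReal (1 / 4) := by
    rw [← ENNReal.ofReal_mul' (by norm_num)]
    ring_nf
  have hremainder := enorm_integral_comp_add_sub_sub_le (p := p) (q := q)
    (v := fun r => w (r - s)) (g := fun r => (1 / 2) * radonT f r θ)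
    (k := fun r => (1 / 2) * radonT h r θ) hE hM hN (hw1.comp_sub_right s)
    (hwp.comp_measurePreserving htranslate) ((aestronglyMeasurable_radonT hf θ).const_mul _)
    ((aestronglyMeasurable_radonT hh θ).const_mul _) hsqLp
  rw [hwnorm, hsq, eLpNorm_const_smul,
    Real.enorm_of_nonneg (r := 1 / 4) (by norm_num)] at hremainder
  rw [Fop_add w E hf hh, Aop_eq_integral, Fop, hconst]
  exact hremainder.trans_eq (by ring)

lemma eLpNorm_Fop_add_sub_sub_Aop_le (hw1 : Integrable w) (hwp : MemLp w p)
    (hE : ContDiff ℝ 2 E) (hM : ∀ x, |E x| ≤ M) (hN : ∀ x, |deriv (deriv E) x| ≤ N)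
    (hf : Integrable f) (hh : Integrable h) (hsupp : Function.support h ⊆ unitDisk) (hq : q ≠ ⊤)
    (hRh : MemLp (fun z : ℝ × ℝ => radonT h z.1 z.2 ^ 2) q (volume.restrict sinoDom)) :
    eLpNorm (fun z : ℝ × ℝ =>
        Fop w E (f + h) z.1 z.2 - Fop w E f z.1 z.2 - Aop w (deriv E) f h z.1 z.2) q
        (volume.restrict sinoDom) ≤
      ENNReal.ofReal (N / 8) * eLpNorm w p * 2 ^ (1 / q.toReal) *
        eLpNorm (fun z : ℝ × ℝ => radonT h z.1 z.2 ^ 2) q (volume.restrict sinoDom) := by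
  have hq0 : q ≠ 0 := ENNReal.HolderConjugate.ne_zero q p
  have hlength : volume.restrict (Icc (-1 : ℝ) 1) univ = 2 := by
    rw [Measure.restrict_apply_univ, Real.volume_Icc]
    norm_num
  rw [volume_restrict_sinoDom] at hRh ⊢
  rw [← hlength]
  refine eLpNorm_prod_le_of_enorm_le_eLpNorm_fiber hq0 hq hRh.1 ?_
  filter_upwards [ae_memLp_fiber hq0 hq hRh] with θ hθ s
  have hsuppR : Function.support (fun r => radonT h r θ ^ 2) ⊆ Icc (-1) 1 :=
    (Function.support_pow _ two_ne_zero).trans_subset (support_radonT_subset_Icc hsupp θ)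
  have hθ' : MemLp (fun r => radonT h r θ ^ 2) q :=
    ⟨(aestronglyMeasurable_radonT hh θ).pow 2,
      eLpNorm_restrict_eq_of_support_subset hsuppR ▸ hθ.2⟩
  rw [eLpNorm_restrict_eq_of_support_subset hsuppR]
  exact enorm_Fop_add_sub_sub_Aop_le hw1 hwp hE hM hN hf hh s θ hθ'

end ForwardOperator

theorem quadratic_remainder_estimate_general (w 𝓔 : ℝ → ℝ)
    (hw1 : Integrable w) (hw2 : MemLp w 2) (h𝓔 : ContDiff ℝ 2 𝓔)
    (h𝓔b : ∃ M : ℝ, ∀ x, |𝓔 x| ≤ M ∧ |deriv (deriv 𝓔) x| ≤ M) (f h : ℝ × ℝ → ℝ)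
    (hf : Integrable f) (hh : Integrable h) (hhsupp : Function.support h ⊆ unitDisk)
    (hRh : MemLp (fun p : ℝ × ℝ => radonT h p.1 p.2) 4 (volume.restrict sinoDom)) :
    eLpNorm
        (fun p : ℝ × ℝ =>
          Fop w 𝓔 (f + h) p.1 p.2 - Fop w 𝓔 f p.1 p.2 - Aop w (deriv 𝓔) f h p.1 p.2) 2
        (volume.restrict sinoDom) ≤
      ENNReal.ofReal (√2 / 8) * eLpNorm w 2 * eLpNorm (deriv (deriv 𝓔)) ⊤ *
        (eLpNorm (fun p : ℝ × ℝ => radonT h p.1 p.2) 4 (volume.restrict sinoDom)) ^ 2 := by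
  obtain ⟨M, hM⟩ := h𝓔b
  have hcont : Continuous (deriv (deriv 𝓔)) := (h𝓔.deriv' (n := 1)).continuous_deriv le_rfl
  have hfin : eLpNorm (deriv (deriv 𝓔)) ⊤ ≠ ⊤ :=
    (memLp_top_of_bound hcont.aestronglyMeasurable M
      (ae_of_all _ fun x => (hM x).2)).eLpNorm_ne_top
  have hfour : (4 : ENNReal) = 2 * 2 := by norm_num
  have hconst : ENNReal.ofReal ((eLpNorm (deriv (deriv 𝓔)) ⊤).toReal / 8) *
      2 ^ (1 / (2 : ENNReal).toReal) = ENNReal.ofReal (√2 / 8) * eLpNorm (deriv (deriv 𝓔)) ⊤ := by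
    have hsqrt : (2 : ENNReal) ^ (1 / (2 : ENNReal).toReal) = ENNReal.ofReal √2 := by
      rw [Real.sqrt_eq_rpow, ← ENNReal.ofReal_rpow_of_pos two_pos, ENNReal.ofReal_ofNat,
        ENNReal.toReal_ofNat]
    nth_rw 2 [← ENNReal.ofReal_toReal hfin]
    rw [hsqrt, ← ENNReal.ofReal_mul (by positivity), ← ENNReal.ofReal_mul (by positivity)]
    ring_nf
  rw [hfour] at hRh ⊢
  rw [← eLpNorm_sq, mul_right_comm (ENNReal.ofReal _), ← hconst]
  exact (eLpNorm_Fop_add_sub_sub_Aop_le hw1 hw2 h𝓔 (fun x => (hM x).1)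
    (norm_le_toReal_eLpNorm_top_of_continuous hcont hfin) hf hh hhsupp ENNReal.ofNat_ne_top
    (memLp_sq hRh)).trans_eq (by ring)

/-- For `w ∈ L¹(ℝ) ∩ L²(ℝ)` and `𝓔` twice continuously differentiable
with `𝓔, 𝓔', 𝓔''` bounded, and `f, h ∈ L²(Ω_D)` with `Rh ∈ L⁴(Ω_S)`, the quadratic
remainder estimate holds:
`‖F(f+h) − F(f) − A(f)h‖_{L²(Ω_S)} ≤ ¼·‖w‖_{L²}·‖𝓔''‖_{L^∞}·‖Rh‖²_{L⁴(Ω_S)}`. -/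
theorem quadratic_remainder_estimate (w 𝓔 : ℝ → ℝ)
    (hw1 : Integrable w) (hw2 : MemLp w 2 volume)
    (h𝓔 : ContDiff ℝ 2 𝓔)
    (h𝓔b : ∃ M : ℝ, ∀ x : ℝ, |𝓔 x| ≤ M ∧ |deriv 𝓔 x| ≤ M ∧ |deriv (deriv 𝓔) x| ≤ M)
    (f h : ℝ × ℝ → ℝ)
    (hf : MemLp f 2 volume) (hfsupp : Function.support f ⊆ unitDisk)
    (hh : MemLp h 2 volume) (hhsupp : Function.support h ⊆ unitDisk)
    (hRh : MemLp (fun p : ℝ × ℝ => radonT h p.1 p.2) 4 (volume.restrict sinoDom)) :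
    eLpNorm
        (fun p : ℝ × ℝ =>
          Fop w 𝓔 (f + h) p.1 p.2 - Fop w 𝓔 f p.1 p.2 - Aop w (deriv 𝓔) f h p.1 p.2) 2
        (volume.restrict sinoDom) ≤
      ENNReal.ofReal (1 / 4) * eLpNorm w 2 volume * eLpNorm (deriv (deriv 𝓔)) ⊤ volume *
        (eLpNorm (fun p : ℝ × ℝ => radonT h p.1 p.2) 4 (volume.restrict sinoDom)) ^ 2 := by
  obtain ⟨M, hM⟩ := h𝓔b
  have hfi : Integrable f := integrable_of_memLp_of_support_subset_unitDisk one_le_two hf hfsupp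
  have hhi : Integrable h := integrable_of_memLp_of_support_subset_unitDisk one_le_two hh hhsupp
  refine (quadratic_remainder_estimate_general w 𝓔 hw1 hw2 h𝓔
    ⟨M, fun x => ⟨(hM x).1, (hM x).2.2⟩⟩ f h hfi hhi hhsupp hRh).trans ?_
  have hsqrt : √2 / 8 ≤ 1 / 4 := by linarith [Real.sqrt_two_lt_three_halves]
  gcongr
end

section
/- For every f ∈ L²(Ω_D) (extended by zero to ℝ²), the Radon transform Rf belongs to L²(Ω_S) and satisfies ‖Rf‖_{L²(Ω_S)} ≤ 2√π · ‖f‖_{L²(Ω_D)}; hence R : L²(Ω_D) → L²(Ω_S) is a bounded linear operator. -/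
open MeasureTheory Real Set

/-!
For a fixed angle `θ`, the point `s·u(θ) + σ·u(θ)^⊥` is the image of `(s, σ)` under a rotation,
which preserves area. Integrating `|f|^p` over all lines whose angles are distributed according to
a measure `ν` therefore gives `ν(ℝ)` times its integral over the plane. On a single line, Hölder's
inequality bounds the line integral by `L^(1 - 1/p)` times the `L^p` norm, where `L` is the length
of the part of the line on which `f` does not vanish. For the unit disk `L = 2`, and `p = 2` with
the angles in `[0, 2π)` gives the constant `√2 · √(2π) = 2√π`.
-/

/-- The rotation `(s, σ) ↦ s·u(θ) + σ·u(θ)^⊥` of `ℝ²` by the angle `θ`. It is written out in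
coordinates because `radonT` works on `ℝ × ℝ` with no Euclidean structure. -/
noncomputable def planeRotation (θ : ℝ) (x : ℝ × ℝ) : ℝ × ℝ :=
  (x.1 * cos θ - x.2 * sin θ, x.1 * sin θ + x.2 * cos θ)

/-- The point with parameter `σ` on the line with sinogram coordinates `(s, θ)`, as a function of
`((s, θ), σ)`, so that `radonT f s θ` is a partial integral of `f ∘ lineParam`. -/
noncomputable def lineParam (q : (ℝ × ℝ) × ℝ) : ℝ × ℝ :=
  planeRotation q.1.2 (q.1.1, q.2)

lemma planeRotation_sq_add_sq (θ : ℝ) (x : ℝ × ℝ) :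
    (planeRotation θ x).1 ^ 2 + (planeRotation θ x).2 ^ 2 = x.1 ^ 2 + x.2 ^ 2 := by
  simp only [planeRotation]
  linear_combination (x.1 ^ 2 + x.2 ^ 2) * sin_sq_add_cos_sq θ

lemma planeRotation_eq_rotation (θ : ℝ) :
    planeRotation θ = Complex.measurableEquivRealProd ∘ rotation (Circle.exp θ) ∘
      Complex.measurableEquivRealProd.symm := by
  ext x <;>
    simp [planeRotation, Circle.coe_exp, Complex.exp_ofReal_mul_I_re,
      Complex.exp_ofReal_mul_I_im] <;> ring

lemma measurePreserving_planeRotation (θ : ℝ) :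
    MeasurePreserving (planeRotation θ) volume volume := by
  rw [planeRotation_eq_rotation]
  exact Complex.volume_preserving_equiv_real_prod.comp
    ((rotation (Circle.exp θ)).measurePreserving.comp
      Complex.volume_preserving_equiv_real_prod.symm)

lemma measurePreserving_lineParam (ν : Measure ℝ) [SFinite ν] :
    MeasurePreserving lineParam ((volume.prod ν).prod volume)
      (ν univ • (volume : Measure (ℝ × ℝ))) := by
  have angleFirst : MeasurePreserving (Prod.map Prod.swap id : (ℝ × ℝ) × ℝ → (ℝ × ℝ) × ℝ)
      ((volume.prod ν).prod volume) ((ν.prod volume).prod volume) :=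
    Measure.measurePreserving_swap.prod (.id _)
  have regroup : MeasurePreserving MeasurableEquiv.prodAssoc
      ((ν.prod volume).prod volume) (ν.prod (volume : Measure (ℝ × ℝ))) :=
    measurePreserving_prodAssoc ν volume volume
  have rotate : MeasurePreserving (fun q : ℝ × (ℝ × ℝ) => (q.1, planeRotation q.1 q.2))
      (ν.prod volume) (ν.prod volume) :=
    (MeasurePreserving.id ν).skew_product (by unfold planeRotation; fun_prop)
      (.of_forall fun θ => (measurePreserving_planeRotation θ).map_eq)
  have forgetAngle : MeasurePreserving Prod.snd (ν.prod volume)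
      (ν univ • (volume : Measure (ℝ × ℝ))) := ⟨measurable_snd, Measure.map_snd_prod⟩
  exact forgetAngle.comp (rotate.comp (regroup.comp angleFirst))

section LpBounds

open scoped ENNReal NNReal

lemma one_sub_toReal_inv_nonneg {p : ℝ≥0∞} (hp : 1 ≤ p) : 0 ≤ 1 - p⁻¹.toReal :=
  sub_nonneg.mpr (ENNReal.toReal_le_of_le_ofReal zero_le_one (by simpa using hp))

lemma enorm_integral_le_eLpNorm_mul_rpow_measure_support {α E : Type*} [MeasurableSpace α]
    [NormedAddCommGroup E] [NormedSpace ℝ E] {μ : Measure α} {p : ℝ≥0∞} (hp : 1 ≤ p) (g : α → E) :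
    ‖∫ x, g x ∂μ‖ₑ ≤ μ (Function.support g) ^ (1 - p⁻¹.toReal) * eLpNorm g p μ := by
  by_cases hg : Integrable g μ
  · have hsupp : ∫ x in Function.support g, g x ∂μ = ∫ x, g x ∂μ :=
      setIntegral_eq_integral_of_forall_compl_eq_zero fun _ => Function.notMem_support.mp
    calc ‖∫ x, g x ∂μ‖ₑ
        ≤ eLpNorm g 1 (μ.restrict (Function.support g)) := by
          rw [← hsupp, eLpNorm_one_eq_lintegral_enorm]
          exact enorm_integral_le_lintegral_enorm g
      _ ≤ eLpNorm g p (μ.restrict (Function.support g)) *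
            μ (Function.support g) ^ (1 - p⁻¹.toReal) := by
          simpa [ENNReal.toReal_inv] using
            eLpNorm_le_eLpNorm_mul_rpow_measure_univ hp hg.aestronglyMeasurable.restrict
      _ ≤ μ (Function.support g) ^ (1 - p⁻¹.toReal) * eLpNorm g p μ := by
          rw [mul_comm]
          gcongr
          exact Measure.restrict_le_self
  · simp [integral_undef hg]

lemma eLpNorm_eLpNorm_le_eLpNorm_prod {α β E : Type*} [MeasurableSpace α] [MeasurableSpace β]
    [NormedAddCommGroup E] {μ : Measure α} {ν : Measure β} [SFinite ν] {g : α × β → E}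
    (hg : AEStronglyMeasurable g (μ.prod ν)) (p : ℝ≥0∞) :
    eLpNorm (fun x => eLpNorm (fun y => g (x, y)) p ν) p μ ≤ eLpNorm g p (μ.prod ν) := by
  rcases eq_or_ne p 0 with rfl | hp₀
  · simp
  rcases eq_or_ne p ∞ with rfl | hp
  · simp only [eLpNorm_exponent_top]
    refine eLpNormEssSup_le_of_ae_enorm_bound ?_
    filter_upwards [Measure.ae_ae_of_ae_prod (enorm_ae_le_eLpNormEssSup g (μ.prod ν))] with x hx
    exact eLpNormEssSup_le_of_ae_enorm_bound hx
  · have hp' : p.toReal ≠ 0 := ENNReal.toReal_ne_zero.mpr ⟨hp₀, hp⟩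
    simp only [eLpNorm_eq_lintegral_rpow_enorm_toReal hp₀ hp, enorm_eq_self, one_div,
      ENNReal.rpow_inv_rpow hp']
    rw [lintegral_prod _ (hg.enorm.pow_const _)]

variable {f : ℝ × ℝ → ℝ} {p : ℝ≥0∞}

lemma aestronglyMeasurable_comp_lineParam (hf : AEStronglyMeasurable f) (ν : Measure ℝ)
    [SFinite ν] :
    AEStronglyMeasurable (f ∘ lineParam) ((volume.prod ν).prod volume) :=
  (hf.smul_measure (ν univ)).comp_measurePreserving (measurePreserving_lineParam ν)

lemma eLpNorm_comp_lineParam_le (hf : AEStronglyMeasurable f) (p : ℝ≥0∞) (ν : Measure ℝ)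
    [SFinite ν] :
    eLpNorm (f ∘ lineParam) p ((volume.prod ν).prod volume) ≤
      ν univ ^ p⁻¹.toReal * eLpNorm f p := by
  rw [eLpNorm_comp_measurePreserving (hf.smul_measure _) (measurePreserving_lineParam ν)]
  simpa using eLpNorm_smul_measure_le (ν univ) f p volume

lemma aestronglyMeasurable_radonT_s5 (hf : AEStronglyMeasurable f) (ν : Measure ℝ) [SFinite ν] :
    AEStronglyMeasurable (fun q : ℝ × ℝ => radonT f q.1 q.2) (volume.prod ν) :=
  (aestronglyMeasurable_comp_lineParam hf ν).integral_prod_right'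

lemma eLpNorm_radonT_le (hf : AEStronglyMeasurable f) (hp : 1 ≤ p) (ν : Measure ℝ) [SFinite ν]
    {L : ℝ≥0} (hL : ∀ q, volume (Function.support fun σ => f (lineParam (q, σ))) ≤ L) :
    eLpNorm (fun q : ℝ × ℝ => radonT f q.1 q.2) p (volume.prod ν) ≤
      L ^ (1 - p⁻¹.toReal) * ν univ ^ p⁻¹.toReal * eLpNorm f p := by
  have hexp : 0 ≤ 1 - p⁻¹.toReal := one_sub_toReal_inv_nonneg hp
  have hline (q : ℝ × ℝ) : ‖radonT f q.1 q.2‖ₑ ≤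
      L ^ (1 - p⁻¹.toReal) * eLpNorm (fun σ => f (lineParam (q, σ))) p :=
    (enorm_integral_le_eLpNorm_mul_rpow_measure_support hp _).trans
      (mul_le_mul_left (ENNReal.rpow_le_rpow (hL q) hexp) _)
  have hsections : eLpNorm (fun q => eLpNorm (fun σ => f (lineParam (q, σ))) p) p
      (volume.prod ν) ≤ ν univ ^ p⁻¹.toReal * eLpNorm f p :=
    (eLpNorm_eLpNorm_le_eLpNorm_prod (aestronglyMeasurable_comp_lineParam hf ν) p).trans
      (eLpNorm_comp_lineParam_le hf p ν)
  simp only [← ENNReal.coe_rpow_of_nonneg _ hexp, mul_assoc] at hline ⊢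
  exact (eLpNorm_le_mul_eLpNorm_of_ae_le_mul' (.of_forall hline) p).trans
    (mul_le_mul_right hsections _)

theorem radon_bounded_general (hf : MemLp f p) (hp : 1 ≤ p) (ν : Measure ℝ) [IsFiniteMeasure ν]
    {L : ℝ≥0} (hL : ∀ q, volume (Function.support fun σ => f (lineParam (q, σ))) ≤ L) :
    MemLp (fun q : ℝ × ℝ => radonT f q.1 q.2) p (volume.prod ν) ∧
      eLpNorm (fun q : ℝ × ℝ => radonT f q.1 q.2) p (volume.prod ν) ≤
        L ^ (1 - p⁻¹.toReal) * ν univ ^ p⁻¹.toReal * eLpNorm f p := by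
  have hbound := eLpNorm_radonT_le hf.1 hp ν hL
  refine ⟨⟨aestronglyMeasurable_radonT_s5 hf.1 ν, hbound.trans_lt ?_⟩, hbound⟩
  exact ENNReal.mul_lt_top (ENNReal.mul_lt_top
    (ENNReal.rpow_lt_top_of_nonneg (one_sub_toReal_inv_nonneg hp) ENNReal.coe_ne_top)
    (ENNReal.rpow_lt_top_of_nonneg ENNReal.toReal_nonneg (measure_ne_top ν univ))) hf.2

end LpBounds

lemma volume_support_comp_lineParam_le_two {f : ℝ × ℝ → ℝ} (hf : Function.support f ⊆ unitDisk)
    (q : ℝ × ℝ) : volume (Function.support fun σ => f (lineParam (q, σ))) ≤ 2 := by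
  have hchord : Function.support (fun σ => f (lineParam (q, σ))) ⊆ Icc (-1) 1 := by
    intro σ hσ
    have hmem : (lineParam (q, σ)).1 ^ 2 + (lineParam (q, σ)).2 ^ 2 ≤ 1 := hf hσ
    rw [lineParam, planeRotation_sq_add_sq] at hmem
    exact abs_le.mp (sq_le_one_iff_abs_le_one σ |>.mp (by linarith [sq_nonneg q.1]))
  calc volume (Function.support fun σ => f (lineParam (q, σ)))
      ≤ volume (Icc (-1 : ℝ) 1) := measure_mono hchord
    _ = 2 := by norm_num [Real.volume_Icc]

lemma volume_restrict_sinoDom_le :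
    volume.restrict sinoDom ≤ (volume : Measure ℝ).prod (volume.restrict (Ico 0 (2 * π))) := by
  rw [sinoDom, Measure.volume_eq_prod, ← Measure.prod_restrict]
  exact Measure.prod_mono Measure.restrict_le_self le_rfl

lemma two_rpow_mul_volume_Ico_rpow :
    (2 : ENNReal) ^ (1 - (2 : ENNReal)⁻¹.toReal) *
      volume.restrict (Ico 0 (2 * π)) univ ^ (2 : ENNReal)⁻¹.toReal =
        ENNReal.ofReal (2 * √π) := by
  have hhalf : (2 : ENNReal)⁻¹.toReal = 1 / 2 := by norm_num
  have hhalf' : 1 - (2 : ENNReal)⁻¹.toReal = 1 / 2 := by norm_num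
  have hsqrt : (2 * (2 * π)) ^ (1 / 2 : ℝ) = 2 * √π := by
    rw [← sqrt_eq_rpow, ← mul_assoc, sqrt_mul (by norm_num), sqrt_mul_self zero_le_two]
  rw [hhalf', hhalf, ← ENNReal.mul_rpow_of_nonneg _ _ (by norm_num), ← hsqrt,
    ← ENNReal.ofReal_rpow_of_nonneg (by positivity) (by norm_num), ENNReal.ofReal_mul zero_le_two]
  simp

/-- For every `f ∈ L²(Ω_D)` (extended by zero to `ℝ²`), the Radon
transform `Rf` belongs to `L²(Ω_S)` and `‖Rf‖_{L²(Ω_S)} ≤ 2√π · ‖f‖_{L²(Ω_D)}`;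
hence `R : L²(Ω_D) → L²(Ω_S)` is a bounded linear operator. -/
theorem radon_bounded (f : ℝ × ℝ → ℝ) (hf : MemLp f 2 volume)
    (hfsupp : Function.support f ⊆ unitDisk) :
    MemLp (fun p : ℝ × ℝ => radonT f p.1 p.2) 2 (volume.restrict sinoDom) ∧
      eLpNorm (fun p : ℝ × ℝ => radonT f p.1 p.2) 2 (volume.restrict sinoDom) ≤
        ENNReal.ofReal (2 * Real.sqrt π) * eLpNorm f 2 volume := by
  obtain ⟨hmem, hnorm⟩ := radon_bounded_general hf one_le_two
    (volume.restrict (Ico 0 (2 * π))) (L := 2)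
    (volume_support_comp_lineParam_le_two hfsupp)
  rw [ENNReal.coe_ofNat, two_rpow_mul_volume_Ico_rpow] at hnorm
  exact ⟨hmem.mono_measure volume_restrict_sinoDom_le,
    (eLpNorm_mono_measure _ volume_restrict_sinoDom_le).trans hnorm⟩
end
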